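/- arXiv:2604.27397 — 7 statements merged into one kernel-verified Lean document; each statement's English description precedes it below -/
import Mathlib

section
/- Let U = e^{Vθ} be a unit paravector in $R^{n+1} ⊂ Cl(0,n) that is not real, where V ∈ R^{0,n} is a unit vector. Then the set of paravectors W fixed by the action σ(U): W ↦ U W U^* is exactly the set of vectors W ∈ R^{0,n} orthogonal to U (i.e. with U · W = 0). -/
open CliffordAlgebra

noncomputable section

namespace PaperCliff

noncomputable instance : Invertible (2 : ℝ) := invertibleOfNonzero two_ne_zero

/-- The quadratic form on `ℝ^{p,q}`: `p` generators of square `+1`, `q` of square `-1`. -/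
def sigQ (p q : ℕ) : QuadraticForm ℝ (Fin (p + q) → ℝ) :=
  QuadraticMap.weightedSumSquares ℝ
    (fun i : Fin (p + q) => if (i : ℕ) < p then (1 : ℝ) else -1)

/-- The negative-definite quadratic form for `Cl(0,n)`. -/
def negQ (n : ℕ) : QuadraticForm ℝ (Fin n → ℝ) :=
  QuadraticMap.weightedSumSquares ℝ (fun _ : Fin n => (-1 : ℝ))

variable {M : Type*} [AddCommGroup M] [Module ℝ M]

/-- Clifford conjugation: composite of the grade involution and reversal. -/
def cconj {Q : QuadraticForm ℝ M} (x : CliffordAlgebra Q) : CliffordAlgebra Q :=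
  reverse (involute x)

/-- The paravectors `ℝ ⊕ ℝ^{p,q}` inside the Clifford algebra. -/
def paravec (Q : QuadraticForm ℝ M) : Submodule ℝ (CliffordAlgebra Q) :=
  LinearMap.range (Algebra.linearMap ℝ (CliffordAlgebra Q)) ⊔ LinearMap.range (ι Q)

/-- The real (degree-zero) component of an element of the Clifford algebra,
via the canonical linear isomorphism with the exterior algebra. -/
def clRe {Q : QuadraticForm ℝ M} (x : CliffordAlgebra Q) : ℝ :=
  ExteriorAlgebra.algebraMapInv (CliffordAlgebra.equivExterior Q x)

/-- The reduced basis monomial `i_{j₁} ⋯ i_{j_k}` for a finite set of indices (in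
increasing order). -/
def mono {m : ℕ} (Q : QuadraticForm ℝ (Fin m → ℝ)) (s : Finset (Fin m)) :
    CliffordAlgebra Q :=
  ((s.sort (· ≤ ·)).map fun j => ι Q (Pi.single j 1)).prod

/-- The (paravector) Lipschitz group, as a subgroup of the units: the group generated by
invertible paravectors. -/
def lipUnits (Q : QuadraticForm ℝ M) : Subgroup (CliffordAlgebra Q)ˣ :=
  Subgroup.closure {u : (CliffordAlgebra Q)ˣ | (u : CliffordAlgebra Q) ∈ paravec Q}

/-- The underlying set of the paravector Lipschitz group `$Γ`. -/
def lipGrp (Q : QuadraticForm ℝ M) : Set (CliffordAlgebra Q) :=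
  {x | ∃ u ∈ lipUnits Q, (u : CliffordAlgebra Q) = x}

/-- The Lipschitz monoid `$Γ^▷ = $Γ ∪ {0}`. -/
def lipMon (Q : QuadraticForm ℝ M) : Set (CliffordAlgebra Q) :=
  insert 0 (lipGrp Q)

/-- A Lipschitz spinor: a pair of elements of the Lipschitz monoid, not both zero,
with `ξ ⬝ conj η` a paravector. -/
def IsSpinor (Q : QuadraticForm ℝ M) (ξ η : CliffordAlgebra Q) : Prop :=
  ξ ∈ lipMon Q ∧ η ∈ lipMon Q ∧ ¬(ξ = 0 ∧ η = 0) ∧ ξ * cconj η ∈ paravec Q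

/-- Membership in `SL(2, $Γ)`: entries in the Lipschitz monoid, pseudo-determinant
`a^* d - c^* b = 1`, and `a b^*, c d^*, c^* a, d^* b` paravectors. -/
def IsSL2 (Q : QuadraticForm ℝ M) (a b c d : CliffordAlgebra Q) : Prop :=
  a ∈ lipMon Q ∧ b ∈ lipMon Q ∧ c ∈ lipMon Q ∧ d ∈ lipMon Q ∧
    reverse a * d - reverse c * b = 1 ∧
    a * reverse b ∈ paravec Q ∧ c * reverse d ∈ paravec Q ∧
    reverse c * a ∈ paravec Q ∧ reverse d * b ∈ paravec Q

lemma clRe_add {Q : QuadraticForm ℝ M} (x y : CliffordAlgebra Q) :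
    clRe (x + y) = clRe x + clRe y := by
  simp [clRe]

lemma clRe_smul {Q : QuadraticForm ℝ M} (r : ℝ) (x : CliffordAlgebra Q) :
    clRe (r • x) = r * clRe x := by
  simp [clRe]

lemma clRe_zero {Q : QuadraticForm ℝ M} : clRe (0 : CliffordAlgebra Q) = 0 := by
  simp [clRe]

lemma clRe_algebraMap {Q : QuadraticForm ℝ M} (r : ℝ) :
    clRe (algebraMap ℝ (CliffordAlgebra Q) r) = r := by
  unfold clRe equivExterior
  rw [changeFormEquiv_apply, changeForm_algebraMap]
  exact ExteriorAlgebra.algebraMap_leftInverse M r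

lemma clRe_ι {Q : QuadraticForm ℝ M} (m : M) : clRe (ι Q m) = 0 := by
  unfold clRe equivExterior
  rw [changeFormEquiv_apply, changeForm_ι]
  simp [ExteriorAlgebra.algebraMapInv]

lemma ι_anticomm (n : ℕ) (v w : Fin n → ℝ) :
    ι (negQ n) v * ι (negQ n) w =
      algebraMap ℝ _ (-2 * v ⬝ᵥ w) - ι (negQ n) w * ι (negQ n) v := by
  rw [eq_sub_iff_add_eq, ι_mul_ι_add_swap]
  congr 1
  simp only [QuadraticMap.polar, negQ, QuadraticMap.weightedSumSquares_apply, dotProduct,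
    Pi.add_apply, smul_eq_mul, Finset.mul_sum, ← Finset.sum_sub_distrib]
  exact Finset.sum_congr rfl fun i _ => by ring

lemma clRe_ι_mul_ι (n : ℕ) (v w : Fin n → ℝ) :
    clRe (ι (negQ n) v * ι (negQ n) w) = -(v ⬝ᵥ w) := by
  have key : ∀ x y : Fin n → ℝ, clRe (ι (negQ n) x * ι (negQ n) y) =
      clRe (ι (negQ n) y * ι (negQ n) x) := by
    intro x y
    unfold clRe equivExterior
    rw [changeFormEquiv_apply, changeFormEquiv_apply, changeForm_ι_mul_ι, changeForm_ι_mul_ι]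
    have h : ∀ z : Fin n → ℝ,
        ExteriorAlgebra.algebraMapInv (ι (0 : QuadraticForm ℝ (Fin n → ℝ)) z) = 0 := fun z =>
      ExteriorAlgebra.lift_ι_apply ℝ (0 : (Fin n → ℝ) →ₗ[ℝ] ℝ) (by simp) z
    have hB : QuadraticMap.associated (R := ℝ) (-negQ n) x y =
        QuadraticMap.associated (R := ℝ) (-negQ n) y x := by
      simp only [QuadraticMap.associated_apply, add_comm x y, sub_right_comm]
    have h2 : ∀ z z' : Fin n → ℝ, ExteriorAlgebra.algebraMapInv
        (ι (0 : QuadraticForm ℝ (Fin n → ℝ)) z * ι (0 : QuadraticForm ℝ (Fin n → ℝ)) z') = 0 := by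
      intro z z'
      refine (map_mul ExteriorAlgebra.algebraMapInv _ _).trans ?_
      rw [h, zero_mul]
    rw [hB]
    refine (map_sub ExteriorAlgebra.algebraMapInv _ _).trans ?_
    refine Eq.trans ?_ (map_sub ExteriorAlgebra.algebraMapInv _ _).symm
    rw [h2, h2]
  have h1 := congrArg clRe (ι_anticomm n v w)
  rw [sub_eq_add_neg, ← neg_one_smul ℝ (ι (negQ n) w * ι (negQ n) v), clRe_add, clRe_smul, clRe_algebraMap, key w v] at h1
  linarith

lemma sandwich (n : ℕ) (v w : Fin n → ℝ)
    (hv : ι (negQ n) v * ι (negQ n) v = -1) (a c s : ℝ) (h : c ^ 2 + s ^ 2 = 1) :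
    (algebraMap ℝ _ c + s • ι (negQ n) v) * (algebraMap ℝ _ a + ι (negQ n) w) *
      (algebraMap ℝ _ c + s • ι (negQ n) v) =
    (algebraMap ℝ _ a + ι (negQ n) w) +
      (algebraMap ℝ _ (-2 * s * (s * a + c * v ⬝ᵥ w)) +
        (2 * s * (c * a - s * v ⬝ᵥ w)) • ι (negQ n) v) := by
  have h1 := ι_anticomm n v w
  have h2 : ι (negQ n) v * ι (negQ n) w * ι (negQ n) v =
      (-2 * v ⬝ᵥ w) • ι (negQ n) v + ι (negQ n) w := by
    rw [h1, sub_mul, mul_assoc, hv, ← Algebra.smul_def]; simp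
  have e : (algebraMap ℝ _ c + s • ι (negQ n) v) * (algebraMap ℝ _ a + ι (negQ n) w) *
      (algebraMap ℝ _ c + s • ι (negQ n) v) =
      (c * c * a) • 1 + (2 * c * s * a) • ι (negQ n) v
        + (a * s * s) • (ι (negQ n) v * ι (negQ n) v) + (c * c) • ι (negQ n) w
        + (c * s) • (ι (negQ n) v * ι (negQ n) w) + (c * s) • (ι (negQ n) w * ι (negQ n) v)
        + (s * s) • (ι (negQ n) v * ι (negQ n) w * ι (negQ n) v) := by
    simp only [Algebra.algebraMap_eq_smul_one, mul_add, add_mul, smul_mul_assoc, mul_smul_comm,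
      one_mul, mul_one, smul_smul]
    module
  rw [e, h2, h1, hv]
  simp only [Algebra.algebraMap_eq_smul_one]
  have hc : c * c = 1 - s * s := by linarith
  rw [hc]
  match_scalars <;> ring

/-- Let `U = e^{Vθ} = cos θ + V sin θ` be a unit paravector in
`Cl(0,n)` which is not real, where `V` is a unit vector. The paravectors `W` fixed by
`σ(U) : W ↦ U W U^*` are exactly the vectors `W ∈ ℝ^{0,n}` orthogonal to `U`
(i.e. with `U · W = Re(U conj W) = 0`). -/
theorem fixed_points_of_rotation (n : ℕ) (v : Fin n → ℝ)
    (hv : ι (negQ n) v * ι (negQ n) v = -1) (θ : ℝ)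
    (U : CliffordAlgebra (negQ n))
    (hU : U = algebraMap ℝ (CliffordAlgebra (negQ n)) (Real.cos θ) +
      Real.sin θ • ι (negQ n) v)
    (hUnotreal : U ∉ Set.range (algebraMap ℝ (CliffordAlgebra (negQ n)))) :
    ∀ W ∈ paravec (negQ n),
      (U * W * reverse U = W ↔
        (∃ w : Fin n → ℝ, W = ι (negQ n) w) ∧ clRe (U * cconj W) = 0) := by
  intro W hW
  obtain ⟨x, ⟨a, rfl⟩, y, ⟨w, rfl⟩, rfl⟩ := Submodule.mem_sup.1 hW
  rw [Algebra.linearMap_apply]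
  have hs : Real.sin θ ≠ 0 := by
    intro h
    exact hUnotreal ⟨Real.cos θ, by rw [hU, h]; simp⟩
  have hcs := Real.cos_sq_add_sin_sq θ
  have hrev : reverse U = U := by
    rw [hU]; simp
  have hι : ι (negQ n) v ≠ 0 := by
    intro h
    rw [h, mul_zero] at hv
    have := congrArg clRe hv
    rw [← map_one (algebraMap ℝ _), ← map_neg, clRe_algebraMap,
      clRe_zero] at this
    norm_num at this
  have hfix : U * (algebraMap ℝ _ a + ι (negQ n) w) * reverse U =
      algebraMap ℝ _ a + ι (negQ n) w ↔ a = 0 ∧ v ⬝ᵥ w = 0 := by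
    rw [hrev, hU, sandwich n v w hv a _ _ hcs, add_eq_left]
    constructor
    · intro h
      have h1 := congrArg clRe h
      rw [clRe_add, clRe_smul, clRe_ι, clRe_algebraMap, clRe_zero, mul_zero, add_zero] at h1
      rw [h1, map_zero, zero_add, smul_eq_zero, or_iff_left hι] at h
      have h3 : Real.sin θ * a + Real.cos θ * v ⬝ᵥ w = 0 := by
        simpa [hs] using h1
      have h4 : Real.cos θ * a - Real.sin θ * v ⬝ᵥ w = 0 := by
        simpa [hs] using h
      constructor
      · linear_combination Real.sin θ * h3 + Real.cos θ * h4 - a * hcs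
      · linear_combination Real.cos θ * h3 - Real.sin θ * h4 - v ⬝ᵥ w * hcs
    · rintro ⟨h1, h2⟩
      simp [h1, h2]
  have hre : a = 0 → clRe (U * cconj (algebraMap ℝ _ a + ι (negQ n) w)) =
      Real.sin θ * v ⬝ᵥ w := by
    intro ha
    have : U * cconj (algebraMap ℝ _ a + ι (negQ n) w) =
        (-Real.cos θ) • ι (negQ n) w + (-Real.sin θ) • (ι (negQ n) v * ι (negQ n) w) := by
      rw [hU, ha]
      simp [cconj, Algebra.algebraMap_eq_smul_one, add_mul]
      abel
    rw [this, clRe_add, clRe_smul, clRe_smul, clRe_ι, clRe_ι_mul_ι]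
    ring
  rw [hfix]
  constructor
  · rintro ⟨ha, hd⟩
    exact ⟨⟨w, by simp [ha]⟩, by rw [hre ha, hd, mul_zero]⟩
  · rintro ⟨⟨w', hw'⟩, h⟩
    have ha := congrArg clRe hw'
    rw [clRe_add, clRe_algebraMap, clRe_ι, clRe_ι, add_zero] at ha
    rw [hre ha] at h
    exact ⟨ha, by simpa [hs] using h⟩

end PaperCliff
end
end

section
/- The action of SL(2, $Γ_{n+1}) on Lipschitz spinors by matrix multiplication is transitive: for any two Lipschitz spinors κ_1, κ_2 there exists A ∈ SL(2, $Γ_{n+1}) with A κ_1 = κ_2. In particular, for any Lipschitz spinor (ξ,η) with both components nonzero, the matrix [[ξ, −(1/2)η^{*-1}],[η, (1/2)ξ^{*-1}]] lies in SL(2, $Γ_{n+1}) and sends (1,0) to (ξ,η). -/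
open CliffordAlgebra

noncomputable section

namespace PaperCliff

variable {M : Type*} [AddCommGroup M] [Module ℝ M]

section Helpers

variable {Q : QuadraticForm ℝ M}

lemma pv_scalar (r : ℝ) : algebraMap ℝ (CliffordAlgebra Q) r ∈ paravec Q :=
  Submodule.mem_sup_left ⟨r, rfl⟩

lemma pv_one : (1 : CliffordAlgebra Q) ∈ paravec Q := by
  have := pv_scalar (Q := Q) 1
  simpa using this

lemma pv_cases {p : CliffordAlgebra Q} (hp : p ∈ paravec Q) :
    ∃ (r : ℝ) (v : M), p = algebraMap ℝ _ r + ι Q v := by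
  obtain ⟨y, ⟨r, rfl⟩, z, ⟨v, rfl⟩, rfl⟩ := Submodule.mem_sup.1 hp
  exact ⟨r, v, rfl⟩

lemma pv_mk (r : ℝ) (v : M) : algebraMap ℝ _ r + ι Q v ∈ paravec Q :=
  Submodule.mem_sup.2 ⟨_, ⟨r, rfl⟩, _, ⟨v, rfl⟩, rfl⟩

lemma pv_rev {p : CliffordAlgebra Q} (hp : p ∈ paravec Q) : reverse p = p := by
  obtain ⟨r, v, rfl⟩ := pv_cases hp
  simp

lemma cconj_mk (r : ℝ) (v : M) :
    cconj (algebraMap ℝ _ r + ι Q v) = algebraMap ℝ _ r - ι Q v := by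
  simp [cconj, sub_eq_add_neg]

lemma cconj_mul (x y : CliffordAlgebra Q) : cconj (x * y) = cconj y * cconj x := by
  simp [cconj]

lemma pv_cconj {p : CliffordAlgebra Q} (hp : p ∈ paravec Q) : cconj p ∈ paravec Q := by
  obtain ⟨r, v, rfl⟩ := pv_cases hp
  rw [cconj_mk, sub_eq_add_neg, ← map_neg]
  exact pv_mk _ _

lemma pv_norm (r : ℝ) (v : M) :
    (algebraMap ℝ _ r + ι Q v) * (algebraMap ℝ _ r - ι Q v) =
      algebraMap ℝ _ (r * r - Q v) := by
  have h := Algebra.commutes r (ι Q v)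
  rw [map_sub, ← ι_sq_scalar, map_mul]
  simp only [add_mul, mul_sub, h]
  abel

lemma pv_norm' (r : ℝ) (v : M) :
    (algebraMap ℝ _ r - ι Q v) * (algebraMap ℝ _ r + ι Q v) =
      algebraMap ℝ _ (r * r - Q v) := by
  have := pv_norm (Q := Q) r (-v)
  simpa [sub_eq_add_neg] using this

lemma pv_triple {p q : CliffordAlgebra Q} (hp : p ∈ paravec Q) (hq : q ∈ paravec Q) :
    p * q * p ∈ paravec Q := by
  obtain ⟨r, v, rfl⟩ := pv_cases hp
  obtain ⟨s, w, rfl⟩ := pv_cases hq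
  have e1 : ι Q v * ι Q w * ι Q v =
      (QuadraticMap.polar Q v w) • ι Q v - Q v • ι Q w := by
    have h := ι_mul_ι_add_swap (Q := Q) v w
    rw [Algebra.smul_def, Algebra.smul_def, ← h, ← ι_sq_scalar]
    have h2 : ι Q v * ι Q v * ι Q w = ι Q w * (ι Q v * ι Q v) := by
      rw [ι_sq_scalar, Algebra.commutes]
    rw [h2]; noncomm_ring
  have e2 : ι Q v * ι Q w + ι Q w * ι Q v = algebraMap ℝ _ (QuadraticMap.polar Q v w) :=
    ι_mul_ι_add_swap v w
  have e3 : ι Q v * ι Q v = algebraMap ℝ _ (Q v) := ι_sq_scalar _ _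
  have key : (algebraMap ℝ _ r + ι Q v) * (algebraMap ℝ _ s + ι Q w) * (algebraMap ℝ _ r + ι Q v)
      = r • (s • (algebraMap ℝ _ r + ι Q v) + s • ι Q v) + (r * r) • ι Q w
        + r • (ι Q v * ι Q w + ι Q w * ι Q v)
        + s • (ι Q v * ι Q v) + ι Q v * ι Q w * ι Q v := by
    simp only [Algebra.algebraMap_eq_smul_one, add_mul, mul_add, smul_mul_assoc, mul_smul_comm,
      one_mul, mul_one, smul_add, mul_assoc]
    module
  rw [key, e1, e2, e3]
  have hv : ι Q v ∈ paravec Q := Submodule.mem_sup_right ⟨v, rfl⟩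
  have hw : ι Q w ∈ paravec Q := Submodule.mem_sup_right ⟨w, rfl⟩
  have hs := fun r => pv_scalar (Q := Q) r
  have sm := fun (r : ℝ) {x} (hx : x ∈ paravec Q) => Submodule.smul_mem _ r hx
  exact add_mem (add_mem (add_mem (add_mem (sm _ (add_mem (sm _ (pv_mk _ _)) (sm _ hv)))
    (sm _ hw)) (sm _ (hs _))) (sm _ (hs _))) (sub_mem (sm _ hv) (sm _ hw))

lemma cl_nontrivial : Nontrivial (CliffordAlgebra Q) := by infer_instance

/-- paravector units have nonzero scalar norm -/
lemma pv_unit_norm (u : (CliffordAlgebra Q)ˣ) (hu : (u : CliffordAlgebra Q) ∈ paravec Q) :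
    ∃ r : ℝ, r ≠ 0 ∧ (u : CliffordAlgebra Q) * cconj (u : CliffordAlgebra Q)
      = algebraMap ℝ _ r := by
  obtain ⟨r, v, h⟩ := pv_cases hu
  have h1 : (u : CliffordAlgebra Q) * cconj (u : CliffordAlgebra Q)
      = algebraMap ℝ _ (r * r - Q v) := by rw [h, cconj_mk, pv_norm]
  refine ⟨_, ?_, h1⟩
  intro h0
  rw [h0, map_zero, Units.mul_right_eq_zero, h, cconj_mk, sub_eq_zero] at h1
  have h2 : cconj (algebraMap ℝ (CliffordAlgebra Q) r) = cconj (ι Q v) := by rw [h1]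
  have h3 : algebraMap ℝ (CliffordAlgebra Q) r = - ι Q v := by simpa [cconj] using h2
  have h4 : (u : CliffordAlgebra Q) = 0 := by rw [h, h3]; simp
  exact u.ne_zero h4

lemma pv_inv (u : (CliffordAlgebra Q)ˣ) (hu : (u : CliffordAlgebra Q) ∈ paravec Q) :
    ((u⁻¹ : (CliffordAlgebra Q)ˣ) : CliffordAlgebra Q) ∈ paravec Q := by
  obtain ⟨r, hr, h⟩ := pv_unit_norm u hu
  have : ((u⁻¹ : (CliffordAlgebra Q)ˣ) : CliffordAlgebra Q) = r⁻¹ • cconj (u : CliffordAlgebra Q) := by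
    rw [Units.inv_eq_of_mul_eq_one_right]
    rw [mul_smul_comm, h, Algebra.algebraMap_eq_smul_one, smul_smul, inv_mul_cancel₀ hr, one_smul]
  rw [this]
  exact Submodule.smul_mem _ _ (pv_cconj hu)

/-- reversal on units -/
def revU (u : (CliffordAlgebra Q)ˣ) : (CliffordAlgebra Q)ˣ where
  val := reverse (u : CliffordAlgebra Q)
  inv := reverse ((u⁻¹ : (CliffordAlgebra Q)ˣ) : CliffordAlgebra Q)
  val_inv := by rw [← reverse.map_mul]; simp
  inv_val := by rw [← reverse.map_mul]; simp

lemma revU_val (u : (CliffordAlgebra Q)ˣ) :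
    (revU u : CliffordAlgebra Q) = reverse (u : CliffordAlgebra Q) := rfl

lemma revU_inv_val (u : (CliffordAlgebra Q)ˣ) :
    (((revU u)⁻¹ : (CliffordAlgebra Q)ˣ) : CliffordAlgebra Q)
      = reverse ((u⁻¹ : (CliffordAlgebra Q)ˣ) : CliffordAlgebra Q) := rfl

lemma revU_revU (u : (CliffordAlgebra Q)ˣ) : revU (revU u) = u := by
  ext; simp [revU_val]

lemma revU_mul (u v : (CliffordAlgebra Q)ˣ) : revU (u * v) = revU v * revU u := by
  ext; simp [revU_val]

lemma lip_ind {P : (CliffordAlgebra Q)ˣ → Prop}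
    (mem : ∀ u : (CliffordAlgebra Q)ˣ, (u : CliffordAlgebra Q) ∈ paravec Q → P u)
    (mul : ∀ u v, P u → P v → P (u * v)) {u : (CliffordAlgebra Q)ˣ} (hu : u ∈ lipUnits Q) :
    P u := by
  refine Subgroup.closure_induction'' (p := fun g _ => P g) (fun x hx => mem x hx)
    (fun x hx => mem _ (pv_inv x hx)) (mem 1 (by simpa using pv_one))
    (fun x y _ _ hx hy => mul x y hx hy) hu

lemma lip_pv {u : (CliffordAlgebra Q)ˣ} (hu : (u : CliffordAlgebra Q) ∈ paravec Q) :
    u ∈ lipUnits Q := Subgroup.subset_closure hu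

lemma lip_rev {u : (CliffordAlgebra Q)ˣ} (hu : u ∈ lipUnits Q) : revU u ∈ lipUnits Q := by
  refine lip_ind (P := fun u => revU u ∈ lipUnits Q) ?_ ?_ hu
  · intro u hu; exact lip_pv (by rwa [revU_val, pv_rev hu])
  · intro u v hu hv; rw [revU_mul]; exact mul_mem hv hu

lemma lip_act {u : (CliffordAlgebra Q)ˣ} (hu : u ∈ lipUnits Q) :
    ∀ {p : CliffordAlgebra Q}, p ∈ paravec Q →
      (u : CliffordAlgebra Q) * p * reverse (u : CliffordAlgebra Q) ∈ paravec Q := by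
  refine lip_ind (P := fun u => ∀ {p : CliffordAlgebra Q}, p ∈ paravec Q →
      (u : CliffordAlgebra Q) * p * reverse (u : CliffordAlgebra Q) ∈ paravec Q) ?_ ?_ hu
  · intro u hu p hp; rw [pv_rev hu]; exact pv_triple hu hp
  · intro u v hu hv p hp
    have := hu (hv hp)
    simpa [mul_assoc] using this

lemma lip_act' {u : (CliffordAlgebra Q)ˣ} (hu : u ∈ lipUnits Q)
    {p : CliffordAlgebra Q} (hp : p ∈ paravec Q) :
      reverse (u : CliffordAlgebra Q) * p * (u : CliffordAlgebra Q) ∈ paravec Q := by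
  have := lip_act (lip_rev hu) hp
  simpa [revU_val] using this

lemma lip_norm {u : (CliffordAlgebra Q)ˣ} (hu : u ∈ lipUnits Q) :
    ∃ r : ℝ, r ≠ 0 ∧ (u : CliffordAlgebra Q) * cconj (u : CliffordAlgebra Q)
      = algebraMap ℝ _ r := by
  refine lip_ind (P := fun u => ∃ r : ℝ, r ≠ 0 ∧
    (u : CliffordAlgebra Q) * cconj (u : CliffordAlgebra Q) = algebraMap ℝ _ r) ?_ ?_ hu
  · exact pv_unit_norm
  · intro u v hu hv
    obtain ⟨r, hr, h1⟩ := hu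
    obtain ⟨s, hs, h2⟩ := hv
    refine ⟨s * r, mul_ne_zero hs hr, ?_⟩
    rw [Units.val_mul, cconj_mul]
    calc (u : CliffordAlgebra Q) * v * (cconj (v : CliffordAlgebra Q) * cconj (u : CliffordAlgebra Q))
        = u * (v * cconj (v : CliffordAlgebra Q)) * cconj (u : CliffordAlgebra Q) := by
          simp only [mul_assoc]
      _ = _ := by rw [h2, ← Algebra.commutes, mul_assoc, h1, map_mul]

lemma mon_cases {x : CliffordAlgebra Q} (hx : x ∈ lipMon Q) :
    x = 0 ∨ ∃ u ∈ lipUnits Q, (u : CliffordAlgebra Q) = x := hx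

lemma mon_zero : (0 : CliffordAlgebra Q) ∈ lipMon Q := Or.inl rfl

lemma mon_unit {u : (CliffordAlgebra Q)ˣ} (hu : u ∈ lipUnits Q) :
    (u : CliffordAlgebra Q) ∈ lipMon Q := Or.inr ⟨u, hu, rfl⟩

lemma mon_mul {x y : CliffordAlgebra Q} (hx : x ∈ lipMon Q) (hy : y ∈ lipMon Q) :
    x * y ∈ lipMon Q := by
  rcases mon_cases hx with rfl | ⟨u, hu, rfl⟩
  · rw [zero_mul]; exact mon_zero
  rcases mon_cases hy with rfl | ⟨v, hv, rfl⟩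
  · rw [mul_zero]; exact mon_zero
  exact Or.inr ⟨u * v, mul_mem hu hv, rfl⟩

lemma mon_scalar (r : ℝ) : algebraMap ℝ (CliffordAlgebra Q) r ∈ lipMon Q := by
  by_cases hr : r = 0
  · rw [hr, map_zero]; exact mon_zero
  · exact mon_unit (u := Units.map (algebraMap ℝ (CliffordAlgebra Q)).toMonoidHom
      (Units.mk0 r hr)) (lip_pv (pv_scalar r))

lemma mon_smul (r : ℝ) {x : CliffordAlgebra Q} (hx : x ∈ lipMon Q) : r • x ∈ lipMon Q := by
  rw [Algebra.smul_def]; exact mon_mul (mon_scalar r) hx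

lemma mon_neg {x : CliffordAlgebra Q} (hx : x ∈ lipMon Q) : -x ∈ lipMon Q := by
  have := mon_smul (-1) hx
  simpa using this

lemma lip_neg {u : (CliffordAlgebra Q)ˣ} (hu : u ∈ lipUnits Q) : -u ∈ lipUnits Q := by
  have h : (-1 : (CliffordAlgebra Q)ˣ) ∈ lipUnits Q :=
    lip_pv (by simpa using neg_mem (pv_one (Q := Q)))
  have := mul_mem h hu
  simpa using this

lemma pv_quot {a : CliffordAlgebra Q} {c : (CliffordAlgebra Q)ˣ} (hc : c ∈ lipUnits Q)
    (hca : reverse (c : CliffordAlgebra Q) * a ∈ paravec Q) :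
    ∃ z ∈ paravec Q, a = z * c := by
  refine ⟨a * ((c⁻¹ : (CliffordAlgebra Q)ˣ) : CliffordAlgebra Q), ?_, by simp⟩
  have := lip_act' (inv_mem hc) hca
  rwa [← revU_inv_val, ← revU_val, ← mul_assoc, Units.inv_mul, one_mul] at this

/-- the two remaining conditions are automatic -/
lemma isSL2_of {a b c d : CliffordAlgebra Q} (ha : a ∈ lipMon Q) (hb : b ∈ lipMon Q)
    (hc : c ∈ lipMon Q) (hd : d ∈ lipMon Q) (hdet : reverse a * d - reverse c * b = 1)
    (hca : reverse c * a ∈ paravec Q) (hdb : reverse d * b ∈ paravec Q) :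
    IsSL2 Q a b c d := by
  suffices H : a * reverse b ∈ paravec Q ∧ c * reverse d ∈ paravec Q from
    ⟨ha, hb, hc, hd, hdet, H.1, H.2, hca, hdb⟩
  rcases mon_cases hc with rfl | ⟨c, hcu, rfl⟩
  · -- `c = 0`, `a d^* = 1`
    refine ⟨?_, by simp⟩
    simp only [map_zero, zero_mul, sub_zero] at hdet
    rcases mon_cases ha with rfl | ⟨a, hau, rfl⟩
    · simp
    have hd' : reverse d = ((a⁻¹ : (CliffordAlgebra Q)ˣ) : CliffordAlgebra Q) := by
      have := congrArg reverse hdet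
      simp only [reverse.map_mul, reverse_reverse, reverse.map_one] at this
      exact (Units.inv_eq_of_mul_eq_one_left this).symm
    rw [hd'] at hdb
    have h := pv_rev (lip_act hau hdb)
    have h' := lip_act hau hdb
    rw [Units.mul_inv_cancel_left] at h h'
    simp only [reverse.map_mul, reverse_reverse] at h
    rwa [h]
  · obtain ⟨z, hz, rfl⟩ := pv_quot hcu hca
    have hzr := pv_rev hz
    have hb' : b = z * d - (((revU c)⁻¹ : (CliffordAlgebra Q)ˣ) : CliffordAlgebra Q) := by
      rw [reverse.map_mul, hzr, mul_assoc, ← mul_sub, ← revU_val] at hdet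
      have := Units.inv_eq_of_mul_eq_one_right hdet
      rw [this]; abel
    have hcd : (c : CliffordAlgebra Q) * reverse d ∈ paravec Q := by
      rcases mon_cases hd with rfl | ⟨d, hdu, rfl⟩
      · simp
      have hw : reverse (d : CliffordAlgebra Q) *
          (((revU c)⁻¹ : (CliffordAlgebra Q)ˣ) : CliffordAlgebra Q) ∈ paravec Q := by
        have := sub_mem (lip_act' hdu hz) hdb
        rw [hb'] at this
        simpa [mul_sub, mul_assoc] using this
      have := lip_act hcu hw
      rwa [← revU_val c, mul_assoc, mul_assoc, Units.inv_mul, mul_one] at this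
    refine ⟨?_, hcd⟩
    have : z * c * reverse b = z * (c * reverse d) * z - z := by
      rw [hb', map_sub, reverse.map_mul, hzr, revU_inv_val, reverse_reverse, mul_sub]
      simp [mul_assoc]
    rw [this]
    exact sub_mem (pv_triple hz hcd) hz

end Helpers

section Neg

variable {n : ℕ}

lemma pv_unit {p : CliffordAlgebra (negQ n)} (hp : p ∈ paravec (negQ n)) (h0 : p ≠ 0) :
    ∃ u ∈ lipUnits (negQ n), (u : CliffordAlgebra (negQ n)) = p := by
  obtain ⟨r, v, rfl⟩ := pv_cases hp
  have hs : r * r - negQ n v ≠ 0 := by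
    intro hs
    apply h0
    have e : negQ n v = - ∑ i, v i * v i := by
      simp [negQ, QuadraticMap.weightedSumSquares_apply]
    have hsum : 0 ≤ ∑ i, v i * v i := Finset.sum_nonneg fun i _ => mul_self_nonneg _
    have hr : r = 0 := by
      apply mul_self_eq_zero.1
      nlinarith [mul_self_nonneg r]
    have hv : v = 0 := by
      have h1 : ∑ i, v i * v i = 0 := by nlinarith [mul_self_nonneg r]
      rw [Finset.sum_eq_zero_iff_of_nonneg fun i _ => mul_self_nonneg _] at h1
      funext i
      exact mul_self_eq_zero.1 (h1 i (Finset.mem_univ i))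
    simp [hr, hv]
  refine ⟨⟨_, (r * r - negQ n v)⁻¹ • (algebraMap ℝ _ r - ι (negQ n) v), ?_, ?_⟩, lip_pv hp, rfl⟩
  · rw [mul_smul_comm, pv_norm, Algebra.algebraMap_eq_smul_one, smul_smul, inv_mul_cancel₀ hs,
      one_smul]
  · rw [smul_mul_assoc, pv_norm', Algebra.algebraMap_eq_smul_one, smul_smul, inv_mul_cancel₀ hs,
      one_smul]

lemma pv_mon {p : CliffordAlgebra (negQ n)} (hp : p ∈ paravec (negQ n)) :
    p ∈ lipMon (negQ n) := by
  by_cases h : p = 0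
  · exact Or.inl h
  · exact Or.inr (pv_unit hp h)

lemma sl2_T {a b c d p : CliffordAlgebra (negQ n)} (h : IsSL2 (negQ n) a b c d)
    (hp : p ∈ paravec (negQ n)) : IsSL2 (negQ n) (a + p * c) (b + p * d) c d := by
  obtain ⟨ha, hb, hc, hd, hdet, -, -, hca, hdb⟩ := h
  have key : ∀ {a c : CliffordAlgebra (negQ n)}, a ∈ lipMon (negQ n) → c ∈ lipMon (negQ n) →
      reverse c * a ∈ paravec (negQ n) →
      a + p * c ∈ lipMon (negQ n) ∧ reverse c * (a + p * c) ∈ paravec (negQ n) := by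
    intro a c ha hc hca
    rcases mon_cases hc with rfl | ⟨c, hcu, rfl⟩
    · simpa using ha
    refine ⟨?_, ?_⟩
    · obtain ⟨z, hz, rfl⟩ := pv_quot hcu hca
      rw [← add_mul]
      exact mon_mul (pv_mon (add_mem hz hp)) hc
    · rw [mul_add, ← mul_assoc]
      exact add_mem hca (lip_act' hcu hp)
  refine isSL2_of (key ha hc hca).1 (key hb hd hdb).1 hc hd ?_ (key ha hc hca).2 (key hb hd hdb).2
  rw [← hdet, map_add, reverse.map_mul, pv_rev hp]
  noncomm_ring

lemma sl2_J {a b c d : CliffordAlgebra (negQ n)} (h : IsSL2 (negQ n) a b c d) :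
    IsSL2 (negQ n) (-c) (-d) a b := by
  obtain ⟨ha, hb, hc, hd, hdet, -, -, hca, hdb⟩ := h
  have e1 := pv_rev hca
  have e2 := pv_rev hdb
  simp only [reverse.map_mul, reverse_reverse] at e1 e2
  refine isSL2_of (mon_neg hc) (mon_neg hd) ha hb ?_ ?_ ?_
  · rw [← hdet, map_neg]; noncomm_ring
  · rw [mul_neg, e1]; exact neg_mem hca
  · rw [mul_neg, e2]; exact neg_mem hdb

lemma sl2_D {a b c d : CliffordAlgebra (negQ n)} (h : IsSL2 (negQ n) a b c d)
    {u : (CliffordAlgebra (negQ n))ˣ} (hu : u ∈ lipUnits (negQ n)) :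
    IsSL2 (negQ n) (u * a) (u * b) (((revU u)⁻¹ : (CliffordAlgebra (negQ n))ˣ) * c)
      (((revU u)⁻¹ : (CliffordAlgebra (negQ n))ˣ) * d) := by
  obtain ⟨ha, hb, hc, hd, hdet, -, -, hca, hdb⟩ := h
  have hi := mon_unit (inv_mem (lip_rev hu))
  have hu' := mon_unit hu
  have k1 : ∀ x y : CliffordAlgebra (negQ n),
      reverse ((((revU u)⁻¹ : (CliffordAlgebra (negQ n))ˣ) : CliffordAlgebra (negQ n)) * x) *
        ((u : CliffordAlgebra (negQ n)) * y) = reverse x * y := by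
    intro x y
    rw [reverse.map_mul, revU_inv_val, reverse_reverse, mul_assoc, Units.inv_mul_cancel_left]
  have k2 : ∀ x y : CliffordAlgebra (negQ n),
      reverse ((u : CliffordAlgebra (negQ n)) * x) *
        ((((revU u)⁻¹ : (CliffordAlgebra (negQ n))ˣ) : CliffordAlgebra (negQ n)) * y) = reverse x * y := by
    intro x y
    rw [reverse.map_mul, ← revU_val, mul_assoc, Units.mul_inv_cancel_left]
  refine isSL2_of (mon_mul hu' ha) (mon_mul hu' hb) (mon_mul hi hc) (mon_mul hi hd) ?_ ?_ ?_
  · rw [k1, k2, hdet]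
  · rwa [k1]
  · rwa [k1]

/-- `(x, y)` is in the orbit of `(s, t)`. -/
def Reach (s t x y : CliffordAlgebra (negQ n)) : Prop :=
  ∃ a b c d : CliffordAlgebra (negQ n),
    IsSL2 (negQ n) a b c d ∧ a * s + b * t = x ∧ c * s + d * t = y

variable {s t x y : CliffordAlgebra (negQ n)}

lemma reach_refl : Reach s t s t := by
  have h1 : (1 : CliffordAlgebra (negQ n)) ∈ lipMon (negQ n) := pv_mon pv_one
  exact ⟨1, 0, 0, 1, isSL2_of h1 mon_zero mon_zero h1 (by simp) (by simp) (by simp),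
    by simp, by simp⟩

lemma reach_T (h : Reach s t x y) {p : CliffordAlgebra (negQ n)} (hp : p ∈ paravec (negQ n)) :
    Reach s t (x + p * y) y := by
  obtain ⟨a, b, c, d, h, rfl, rfl⟩ := h
  exact ⟨_, _, _, _, sl2_T h hp, by noncomm_ring, rfl⟩

lemma reach_J (h : Reach s t x y) : Reach s t (-y) x := by
  obtain ⟨a, b, c, d, h, rfl, rfl⟩ := h
  exact ⟨_, _, _, _, sl2_J h, by noncomm_ring, rfl⟩

lemma reach_D (h : Reach s t x y) {u : (CliffordAlgebra (negQ n))ˣ} (hu : u ∈ lipUnits (negQ n)) :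
    Reach s t (u * x) (((revU u)⁻¹ : (CliffordAlgebra (negQ n))ˣ) * y) := by
  obtain ⟨a, b, c, d, h, rfl, rfl⟩ := h
  exact ⟨_, _, _, _, sl2_D h hu, by simp only [mul_add, mul_assoc],
    by simp only [mul_add, mul_assoc]⟩

/-- the ratio of the components of a spinor is a paravector -/
lemma spinor_ratio {ξ : CliffordAlgebra (negQ n)} {η : (CliffordAlgebra (negQ n))ˣ}
    (hη : η ∈ lipUnits (negQ n)) (h : IsSpinor (negQ n) ξ η) :
    ∃ p ∈ paravec (negQ n), ξ = p * η := by
  refine ⟨ξ * ((η⁻¹ : (CliffordAlgebra (negQ n))ˣ) : CliffordAlgebra (negQ n)), ?_, by simp⟩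
  obtain ⟨r, hr, hn⟩ := lip_norm hη
  have e : ((η⁻¹ : (CliffordAlgebra (negQ n))ˣ) : CliffordAlgebra (negQ n))
      = r⁻¹ • cconj (η : CliffordAlgebra (negQ n)) := by
    rw [Units.inv_eq_of_mul_eq_one_right]
    rw [mul_smul_comm, hn, Algebra.algebraMap_eq_smul_one, smul_smul, inv_mul_cancel₀ hr, one_smul]
  rw [e, mul_smul_comm]
  exact Submodule.smul_mem _ _ h.2.2.2

lemma spinor_ratio' {η : CliffordAlgebra (negQ n)} {ξ : (CliffordAlgebra (negQ n))ˣ}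
    (h : IsSpinor (negQ n) ξ η) :
    ∃ p ∈ paravec (negQ n), η = p * ξ := by
  rcases mon_cases h.2.1 with rfl | ⟨η, hη, rfl⟩
  · exact ⟨0, zero_mem _, by simp⟩
  obtain ⟨p, hp, e⟩ := spinor_ratio hη h
  have hp0 : p ≠ 0 := by
    rintro rfl
    rw [zero_mul] at e
    exact ξ.ne_zero e
  obtain ⟨u, -, rfl⟩ := pv_unit hp hp0
  exact ⟨_, pv_inv u hp, by rw [e]; simp⟩

lemma reach_to_one {ξ η : CliffordAlgebra (negQ n)} (h : IsSpinor (negQ n) ξ η) :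
    Reach ξ η 1 0 := by
  have fin : ∀ u ∈ lipUnits (negQ n), Reach ξ η (-(u : CliffordAlgebra (negQ n))) 0 →
      Reach ξ η 1 0 := by
    intro u hu h
    have := reach_D h (inv_mem (lip_neg hu))
    simpa using this
  have h0 : Reach ξ η ξ η := reach_refl
  rcases mon_cases h.1 with rfl | ⟨ξ, hξ, rfl⟩
  · rcases mon_cases h.2.1 with rfl | ⟨η, hη, rfl⟩
    · exact absurd ⟨rfl, rfl⟩ h.2.2.1
    exact fin η hη (reach_J h0)
  · obtain ⟨p, hp, e⟩ := spinor_ratio' h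
    have h1 := reach_T (reach_J h0) hp
    rw [← e, neg_add_cancel] at h1
    exact fin ξ hξ (reach_J h1)

lemma reach_from_one {ξ η : CliffordAlgebra (negQ n)} (h : IsSpinor (negQ n) ξ η)
    (h0 : Reach s t 1 0) : Reach s t ξ η := by
  have st : ∀ u ∈ lipUnits (negQ n), Reach s t (u : CliffordAlgebra (negQ n)) 0 := by
    intro u hu
    simpa using reach_D h0 hu
  rcases mon_cases h.1 with rfl | ⟨ξ, hξ, rfl⟩
  · rcases mon_cases h.2.1 with rfl | ⟨η, hη, rfl⟩
    · exact absurd ⟨rfl, rfl⟩ h.2.2.1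
    simpa using reach_J (st η hη)
  · obtain ⟨p, hp, e⟩ := spinor_ratio' h
    have h1 := reach_J (reach_T (reach_J (st _ (lip_neg hξ))) (neg_mem hp))
    simpa [← e] using h1

end Neg

/-- The action of `SL(2, $Γ_{n+1})` on Lipschitz spinors by matrix
multiplication is transitive; moreover for any Lipschitz spinor `(ξ,η)` with both components
nonzero, the matrix `[[ξ, −½ η^{*-1}],[η, ½ ξ^{*-1}]]` lies in `SL(2, $Γ_{n+1})` and sends
`(1,0)` to `(ξ,η)`. -/
theorem sl2_transitive (n : ℕ) :
    (∀ ξ₁ η₁ ξ₂ η₂ : CliffordAlgebra (negQ n),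
      IsSpinor (negQ n) ξ₁ η₁ → IsSpinor (negQ n) ξ₂ η₂ →
      ∃ a b c d : CliffordAlgebra (negQ n),
        IsSL2 (negQ n) a b c d ∧ a * ξ₁ + b * η₁ = ξ₂ ∧ c * ξ₁ + d * η₁ = η₂) ∧
    (∀ ξ η : CliffordAlgebra (negQ n), IsSpinor (negQ n) ξ η → ξ ≠ 0 → η ≠ 0 →
      IsSL2 (negQ n) ξ (-(((2 : ℝ)⁻¹) • Ring.inverse (reverse η)))
        η (((2 : ℝ)⁻¹) • Ring.inverse (reverse ξ)) ∧
      ξ * 1 + (-(((2 : ℝ)⁻¹) • Ring.inverse (reverse η))) * 0 = ξ ∧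
      η * 1 + (((2 : ℝ)⁻¹) • Ring.inverse (reverse ξ)) * 0 = η) := by
  refine ⟨fun ξ₁ η₁ ξ₂ η₂ h1 h2 => reach_from_one h2 (reach_to_one h1), ?_⟩
  intro ξ η h hξ0 hη0
  refine ⟨?_, by simp, by simp⟩
  rcases mon_cases h.1 with rfl | ⟨ξ, hξ, rfl⟩
  · exact absurd rfl hξ0
  rcases mon_cases h.2.1 with rfl | ⟨η, hη, rfl⟩
  · exact absurd rfl hη0
  rw [← revU_val, ← revU_val, Ring.inverse_unit, Ring.inverse_unit]
  obtain ⟨p, hp, e⟩ := spinor_ratio hη h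
  have hca : reverse (η : CliffordAlgebra (negQ n)) * ξ ∈ paravec (negQ n) := by
    rw [e, ← mul_assoc]; exact lip_act' hη hp
  refine isSL2_of h.1 (mon_neg (mon_smul _ (mon_unit (inv_mem (lip_rev hη))))) h.2.1
    (mon_smul _ (mon_unit (inv_mem (lip_rev hξ)))) ?_ hca ?_
  · rw [← revU_val, ← revU_val, mul_neg, mul_smul_comm, mul_smul_comm, Units.mul_inv,
      Units.mul_inv, sub_neg_eq_add, ← add_smul]
    norm_num
  · have hi := pv_inv (revU η * ξ) hca
    rw [mul_inv_rev, Units.val_mul] at hi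
    rw [map_smul, revU_inv_val ξ, reverse_reverse, mul_neg, mul_smul_comm, smul_mul_assoc]
    exact neg_mem (Submodule.smul_mem _ _ (Submodule.smul_mem _ _ hi))

end PaperCliff
end
end

section
/- The bracket {D_1, D_2} = x_1^* y_2 − y_1^* x_2 on pairs D_m = (x_m, y_m) ∈ Cl(0,n)^2 satisfies the twisted antisymmetry {D_2, D_1} = −{D_1, D_2}^*, and is preserved by the left action of SL(2, $Γ_{n+1}): {A D_1, A D_2} = {D_1, D_2} for all A ∈ SL(2, $Γ_{n+1}). -/
open CliffordAlgebra

noncomputable section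

namespace PaperCliff

variable {M : Type*} [AddCommGroup M] [Module ℝ M]

/-- Paravectors are fixed by reversal. -/
theorem reverse_of_mem_paravec {Q : QuadraticForm ℝ M} {x : CliffordAlgebra Q}
    (hx : x ∈ paravec Q) : reverse x = x := by
  obtain ⟨y, ⟨r, rfl⟩, z, ⟨v, rfl⟩, rfl⟩ := Submodule.mem_sup.1 hx
  simp [reverse.commutes]

/-- The bracket `{D₁, D₂} = x₁^* y₂ − y₁^* x₂` on `Cl(0,n)²` satisfies
the twisted antisymmetry `{D₂, D₁} = −{D₁, D₂}^*` and is preserved by the left action of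
`SL(2, $Γ_{n+1})`. -/
theorem bracket_antisymm_and_invariant (n : ℕ) :
    (∀ x₁ y₁ x₂ y₂ : CliffordAlgebra (negQ n),
      reverse x₂ * y₁ - reverse y₂ * x₁ =
        -(reverse (reverse x₁ * y₂ - reverse y₁ * x₂))) ∧
    (∀ a b c d x₁ y₁ x₂ y₂ : CliffordAlgebra (negQ n), IsSL2 (negQ n) a b c d →
      reverse (a * x₁ + b * y₁) * (c * x₂ + d * y₂) -
          reverse (c * x₁ + d * y₁) * (a * x₂ + b * y₂) =
        reverse x₁ * y₂ - reverse y₁ * x₂) := by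
  refine ⟨fun x₁ y₁ x₂ y₂ => ?_, fun a b c d x₁ y₁ x₂ y₂ h => ?_⟩
  · simp only [map_sub, reverse.map_mul, reverse_reverse]
    abel
  · obtain ⟨-, -, -, -, h1, -, -, hca, hdb⟩ := h
    have e1 : reverse a * c = reverse c * a := by
      simpa only [reverse.map_mul, reverse_reverse] using reverse_of_mem_paravec hca
    have e2 : reverse b * d = reverse d * b := by
      simpa only [reverse.map_mul, reverse_reverse] using reverse_of_mem_paravec hdb
    have h2 : reverse d * a - reverse b * c = 1 := by
      simpa only [map_sub, reverse.map_mul, reverse_reverse, reverse.map_one]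
        using congrArg reverse h1
    simp only [map_add, reverse.map_mul]
    calc _ = reverse x₁ * (reverse a * c - reverse c * a) * x₂
          + reverse x₁ * (reverse a * d - reverse c * b) * y₂
          - reverse y₁ * (reverse d * a - reverse b * c) * x₂
          + reverse y₁ * (reverse b * d - reverse d * b) * y₂ := by noncomm_ring
      _ = _ := by rw [e1, e2, h1, h2]; simp

end PaperCliff
end
end

section
/- For a fixed Lipschitz spinor κ = (ξ,η), every element (a,b) ∈ Cl(0,n)^2 decomposes uniquely as κ x + κ̌ y with x = (conj(ξ)a + conj(η)b)/|κ|^2 and y = (η^* a − ξ^* b)/|κ|^2, where |κ|^2 = |ξ|^2 + |η|^2; thus Cl(0,n)^2 = κ·Cl(0,n) ⊕ κ̌·Cl(0,n). -/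
open CliffordAlgebra

noncomputable section

namespace PaperCliff

variable {M : Type*} [AddCommGroup M] [Module ℝ M]

theorem aux_clRe_algebraMap {Q : QuadraticForm ℝ M} (c : ℝ) :
    clRe (algebraMap ℝ (CliffordAlgebra Q) c) = c := by
  unfold clRe
  rw [CliffordAlgebra.equivExterior]
  simp [CliffordAlgebra.changeForm_algebraMap]

theorem aux_cconj_mul {Q : QuadraticForm ℝ M} (x y : CliffordAlgebra Q) :
    cconj (x * y) = cconj y * cconj x := by
  simp [cconj, reverse.map_mul]

theorem aux_cconj_cconj {Q : QuadraticForm ℝ M} (x : CliffordAlgebra Q) :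
    cconj (cconj x) = x := by
  simp [cconj, ← reverse_involute]

theorem aux_cconj_smul {Q : QuadraticForm ℝ M} (c : ℝ) (x : CliffordAlgebra Q) :
    cconj (c • x) = c • cconj x := by
  simp [cconj]

theorem aux_paravec {Q : QuadraticForm ℝ M} {x : CliffordAlgebra Q} (h : x ∈ paravec Q) :
    ∃ (r : ℝ) (v : M), x = algebraMap ℝ _ r + ι Q v := by
  unfold paravec at h
  rw [Submodule.mem_sup] at h
  obtain ⟨y, ⟨r, rfl⟩, z, ⟨v, rfl⟩, rfl⟩ := h
  exact ⟨r, v, rfl⟩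

theorem aux_paravec_reverse {Q : QuadraticForm ℝ M} {x : CliffordAlgebra Q}
    (h : x ∈ paravec Q) : reverse x = x := by
  obtain ⟨r, v, rfl⟩ := aux_paravec h
  simp [reverse.commutes]

theorem aux_negQ_nonpos (n : ℕ) (v : Fin n → ℝ) : negQ n v ≤ 0 := by
  unfold negQ
  rw [QuadraticMap.weightedSumSquares_apply]
  apply Finset.sum_nonpos
  intro i _
  simp [mul_self_nonneg]

theorem aux_negQ_zero (n : ℕ) (v : Fin n → ℝ) (h : negQ n v = 0) : v = 0 := by
  unfold negQ at h
  rw [QuadraticMap.weightedSumSquares_apply] at h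
  simp only [smul_eq_mul, neg_mul, one_mul, Finset.sum_neg_distrib, neg_eq_zero] at h
  rw [Finset.sum_eq_zero_iff_of_nonneg (fun i _ => mul_self_nonneg _)] at h
  ext i
  simpa using h i (Finset.mem_univ i)

theorem aux_unit (n : ℕ) (u : (CliffordAlgebra (negQ n))ˣ) (hu : u ∈ lipUnits (negQ n)) :
    ∃ c : ℝ, 0 < c ∧ (u : CliffordAlgebra (negQ n)) * cconj u.val = algebraMap ℝ _ c ∧
      cconj u.val * u.val = algebraMap ℝ _ c := by
  unfold lipUnits at hu
  induction hu using Subgroup.closure_induction with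
  | mem u hu =>
    obtain ⟨r, v, hv⟩ := aux_paravec hu
    have hc : cconj u.val = algebraMap ℝ _ r - ι (negQ n) v := by
      rw [hv]; simp [cconj, reverse.commutes, sub_eq_add_neg]
    have hcom : algebraMap ℝ _ r * ι (negQ n) v = ι (negQ n) v * algebraMap ℝ _ r :=
      Algebra.commutes _ _
    refine ⟨r * r - negQ n v, ?_, ?_, ?_⟩
    · have h1 := aux_negQ_nonpos n v
      rcases h1.lt_or_eq with h1 | h1
      · nlinarith [mul_self_nonneg r]
      · have hv0 := aux_negQ_zero n v h1
        rw [h1, sub_zero]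
        have hr : r ≠ 0 := by
          rintro rfl
          have h0 : (u : CliffordAlgebra (negQ n)) = 0 := by rw [hv, hv0]; simp
          have h2 : (1 : CliffordAlgebra (negQ n)) = 0 := by
            rw [← u.mul_inv, h0, zero_mul]
          have h3 := aux_clRe_algebraMap (Q := negQ n) 1
          have h4 := aux_clRe_algebraMap (Q := negQ n) 0
          rw [map_one, h2] at h3
          rw [map_zero, h3] at h4
          exact one_ne_zero h4
        exact mul_self_pos.mpr hr
    · rw [hc, hv, map_sub, map_mul, ← ι_sq_scalar, add_mul, mul_sub, mul_sub, hcom]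
      abel
    · rw [hc, hv, map_sub, map_mul, ← ι_sq_scalar, sub_mul, mul_add, mul_add, hcom]
      abel
  | one => exact ⟨1, one_pos, by simp [cconj], by simp [cconj]⟩
  | mul u w _ _ hu hw =>
    obtain ⟨c, hc, h1, h2⟩ := hu
    obtain ⟨d, hd, h3, h4⟩ := hw
    refine ⟨c * d, mul_pos hc hd, ?_, ?_⟩
    · rw [Units.val_mul, aux_cconj_mul, mul_assoc, ← mul_assoc w.val, h3, Algebra.commutes,
        ← mul_assoc, h1, map_mul]
    · rw [Units.val_mul, aux_cconj_mul, mul_assoc, ← mul_assoc (cconj u.val), h2,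
        Algebra.commutes c, ← mul_assoc, h4, ← map_mul, mul_comm]
  | inv u _ hu =>
    obtain ⟨c, hc, h1, h2⟩ := hu
    have h5 : cconj u.val = c • (u⁻¹).val := by
      rw [← u.inv_mul_cancel_left (cconj u.val), h1, ← Algebra.commutes, Algebra.smul_def]
    have h6 : cconj (u⁻¹).val = c⁻¹ • u.val := by
      have h7 := congrArg cconj h5
      rw [aux_cconj_cconj, aux_cconj_smul] at h7
      rw [h7, smul_smul, inv_mul_cancel₀ hc.ne', one_smul]
    refine ⟨c⁻¹, inv_pos.mpr hc, ?_, ?_⟩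
    · rw [h6, mul_smul_comm, Units.inv_mul, Algebra.algebraMap_eq_smul_one]
    · rw [h6, smul_mul_assoc, Units.mul_inv, Algebra.algebraMap_eq_smul_one]

theorem aux_mon (n : ℕ) (x : CliffordAlgebra (negQ n)) (hx : x ∈ lipMon (negQ n)) :
    ∃ c : ℝ, 0 ≤ c ∧ (c = 0 → x = 0) ∧ x * cconj x = algebraMap ℝ _ c ∧
      cconj x * x = algebraMap ℝ _ c := by
  rcases hx with rfl | ⟨u, hu, rfl⟩
  · exact ⟨0, le_rfl, fun _ => rfl, by simp, by simp⟩
  · obtain ⟨c, hc, h1, h2⟩ := aux_unit n u hu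
    exact ⟨c, hc.le, fun h => absurd h hc.ne', h1, h2⟩

/-- For a fixed Lipschitz spinor `κ = (ξ,η)`, every `(a,b) ∈ Cl(0,n)²`
decomposes uniquely as `κ x + κ̌ y` with `x = (conj(ξ) a + conj(η) b)/|κ|²` and
`y = (η^* a − ξ^* b)/|κ|²`, where `|κ|² = |ξ|² + |η|²`. -/
theorem spinor_direct_sum_decomposition (n : ℕ) (ξ η : CliffordAlgebra (negQ n))
    (h : IsSpinor (negQ n) ξ η) (a b : CliffordAlgebra (negQ n)) :
    (a = ξ * ((clRe (ξ * cconj ξ) + clRe (η * cconj η))⁻¹ • (cconj ξ * a + cconj η * b)) +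
        involute η *
          ((clRe (ξ * cconj ξ) + clRe (η * cconj η))⁻¹ • (reverse η * a - reverse ξ * b)) ∧
      b = η * ((clRe (ξ * cconj ξ) + clRe (η * cconj η))⁻¹ • (cconj ξ * a + cconj η * b)) -
        involute ξ *
          ((clRe (ξ * cconj ξ) + clRe (η * cconj η))⁻¹ • (reverse η * a - reverse ξ * b))) ∧
    ∀ x' y' : CliffordAlgebra (negQ n),
      a = ξ * x' + involute η * y' → b = η * x' - involute ξ * y' →
      x' = (clRe (ξ * cconj ξ) + clRe (η * cconj η))⁻¹ • (cconj ξ * a + cconj η * b) ∧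
      y' = (clRe (ξ * cconj ξ) + clRe (η * cconj η))⁻¹ • (reverse η * a - reverse ξ * b) := by
  obtain ⟨hξ, hη, hne, hp⟩ := h
  obtain ⟨c, hc, hc0, c1, c2⟩ := aux_mon n ξ hξ
  obtain ⟨d, hd, hd0, d1, d2⟩ := aux_mon n η hη
  have hN : c + d ≠ 0 := by
    intro h0
    exact hne ⟨hc0 (by linarith), hd0 (by linarith)⟩
  rw [c1, d1, aux_clRe_algebraMap, aux_clRe_algebraMap]
  have inv_conj : ∀ z : CliffordAlgebra (negQ n), involute (cconj z) = reverse z := by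
    intro z; simp [cconj, ← reverse_involute]
  have rev_conj : ∀ z : CliffordAlgebra (negQ n), reverse (cconj z) = involute z := by
    intro z; simp [cconj]
  have c3 : involute ξ * reverse ξ = algebraMap ℝ _ c := by
    have := congrArg involute c1
    simpa [inv_conj] using this
  have c4 : reverse ξ * involute ξ = algebraMap ℝ _ c := by
    have := congrArg involute c2
    simpa [inv_conj] using this
  have d3 : involute η * reverse η = algebraMap ℝ _ d := by
    have := congrArg involute d1
    simpa [inv_conj] using this
  have d4 : reverse η * involute η = algebraMap ℝ _ d := by
    have := congrArg involute d2
    simpa [inv_conj] using this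
  have e1 : involute η * reverse ξ = ξ * cconj η := by
    have := aux_paravec_reverse hp
    rwa [reverse.map_mul, rev_conj] at this
  have e2 : η * cconj ξ = involute ξ * reverse η := by
    have := congrArg involute e1
    simpa [inv_conj, cconj, ← reverse_involute] using this
  have e3 : cconj η * involute ξ = cconj ξ * involute η := by
    by_cases hz : c = 0
    · rw [hc0 hz]; simp [cconj]
    · have h1 : cconj ξ * (involute η * reverse ξ) * involute ξ =
          cconj ξ * (ξ * cconj η) * involute ξ := by rw [e1]
      rw [← mul_assoc, mul_assoc _ (reverse ξ), c4, ← mul_assoc (cconj ξ) ξ, c2,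
        ← Algebra.commutes, mul_assoc (algebraMap ℝ _ c), ← Algebra.smul_def,
        ← Algebra.smul_def] at h1
      exact (smul_right_injective _ hz h1).symm
  have e4 : reverse η * ξ = reverse ξ * η := by
    have := congrArg involute e3
    simpa [inv_conj] using this
  have key : ∀ z w : CliffordAlgebra (negQ n),
      algebraMap ℝ _ c * z + algebraMap ℝ _ d * z = w → z = (c + d)⁻¹ • w := by
    intro z w hw
    rw [← hw, ← add_mul, ← map_add, ← Algebra.smul_def, smul_smul, inv_mul_cancel₀ hN, one_smul]
  refine ⟨⟨?_, ?_⟩, ?_⟩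
  · rw [mul_smul_comm, mul_smul_comm, ← smul_add]
    apply key
    rw [mul_add, mul_sub, ← mul_assoc, ← mul_assoc, ← mul_assoc, ← mul_assoc, c1, d3, e1]
    abel
  · rw [mul_smul_comm, mul_smul_comm, ← smul_sub]
    apply key
    rw [mul_add, mul_sub, ← mul_assoc, ← mul_assoc, ← mul_assoc, ← mul_assoc, d1, c3, e2]
    abel
  · rintro x y rfl rfl
    constructor
    · apply key
      rw [mul_add, mul_sub, ← mul_assoc, ← mul_assoc, ← mul_assoc, ← mul_assoc, c2, d2, e3]
      abel
    · apply key
      rw [mul_add, mul_sub, ← mul_assoc, ← mul_assoc, ← mul_assoc, ← mul_assoc, c4, d4, e4]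
      abel

end PaperCliff
end
end

section
/- Embedding pairs of elements of Cl(0,n) into Cl(0,n+1) via (u,v) ↦ u + i_{n+1} v, for Lipschitz spinors κ_m = (ξ_m, η_m) with z_m = ξ_m + i_{n+1} η_m, one has conj(z_1) z_2 = ⟨κ_1, κ_2⟩ + i_{n+1} {κ_1, κ_2}, where ⟨·,·⟩ is the generalised Hermitian form and {·,·} the bracket. -/
open CliffordAlgebra

noncomputable section

namespace PaperCliff

variable {M : Type*} [AddCommGroup M] [Module ℝ M]

/-- The linear inclusion `ℝⁿ → ℝⁿ⁺¹` (appending a zero last coordinate). -/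
def inclLin (n : ℕ) : (Fin n → ℝ) →ₗ[ℝ] (Fin (n + 1) → ℝ) where
  toFun v := fun i => if h : (i : ℕ) < n then v ⟨i, h⟩ else 0
  map_add' a b := by funext i; by_cases h : (i : ℕ) < n <;> simp [h]
  map_smul' r a := by funext i; by_cases h : (i : ℕ) < n <;> simp [h]

/-- The inclusion `ℝ^{0,n} → ℝ^{0,n+1}` as an isometry of quadratic forms. -/
def inclIso (n : ℕ) : negQ n →qᵢ negQ (n + 1) where
  toLinearMap := inclLin n
  map_app' v := by
    simp only [negQ, QuadraticMap.weightedSumSquares_apply, inclLin, LinearMap.coe_mk,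
      AddHom.coe_mk]
    rw [Fin.sum_univ_castSucc]
    have h1 : ∀ j : Fin n, ((Fin.castSucc j : Fin (n + 1)) : ℕ) < n := fun j => j.isLt
    simp [Fin.is_lt, Fin.castSucc]

/-- Images of `Cl(0,n)` commute past the new generator up to the grade involution. -/
theorem map_mul_gen (n : ℕ) (x : CliffordAlgebra (negQ n)) :
    CliffordAlgebra.map (inclIso n) x * ι (negQ (n + 1)) (Pi.single (Fin.last n) 1) =
    ι (negQ (n + 1)) (Pi.single (Fin.last n) 1) *
      CliffordAlgebra.map (inclIso n) (involute x) := by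
  induction x using CliffordAlgebra.induction with
  | algebraMap r => simp [Algebra.commutes]
  | ι v =>
    have hc : inclIso n v (Fin.last n) = 0 := by
      change (if h : ((Fin.last n : Fin (n+1)) : ℕ) < n then v ⟨_, h⟩ else 0) = 0
      simp
    have ho : (negQ (n+1)).IsOrtho (inclIso n v) (Pi.single (Fin.last n) 1) := by
      generalize inclIso n v = w at hc ⊢
      rw [QuadraticMap.isOrtho_def]
      simp only [negQ, QuadraticMap.weightedSumSquares_apply]
      rw [Fin.sum_univ_castSucc, Fin.sum_univ_castSucc, Fin.sum_univ_castSucc]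
      simp [hc]
    rw [involute_ι, map_neg, map_apply_ι, ι_mul_ι_comm_of_isOrtho ho, mul_neg]
  | mul a b ha hb => rw [map_mul, mul_assoc, hb, ← mul_assoc, ha, map_mul, map_mul, mul_assoc]
  | add a b ha hb => rw [map_add, add_mul, ha, hb, map_add, map_add, mul_add]

theorem map_invol (n : ℕ) (x : CliffordAlgebra (negQ n)) :
    involute (CliffordAlgebra.map (inclIso n) x) =
      CliffordAlgebra.map (inclIso n) (involute x) := by
  induction x using CliffordAlgebra.induction with
  | algebraMap r => simp
  | ι v => simp
  | mul a b ha hb => simp only [map_mul, ha, hb]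
  | add a b ha hb => simp only [map_add, ha, hb]

theorem map_rev (n : ℕ) (x : CliffordAlgebra (negQ n)) :
    reverse (CliffordAlgebra.map (inclIso n) x) =
      CliffordAlgebra.map (inclIso n) (reverse x) := by
  induction x using CliffordAlgebra.induction with
  | algebraMap r => simp
  | ι v => simp
  | mul a b ha hb => simp only [map_mul, reverse.map_mul, ha, hb]
  | add a b ha hb => simp only [map_add, ha, hb]

theorem gen_sq (n : ℕ) : ι (negQ (n + 1)) (Pi.single (Fin.last n) 1) *
    ι (negQ (n + 1)) (Pi.single (Fin.last n) 1) = -1 := by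
  rw [ι_sq_scalar]
  have h : negQ (n+1) (Pi.single (Fin.last n) 1) = -1 := by
    simp only [negQ, QuadraticMap.weightedSumSquares_apply]
    rw [Fin.sum_univ_castSucc]
    simp
  rw [h]; simp

/-- Embedding pairs of elements of `Cl(0,n)` into `Cl(0,n+1)` via
`(u,v) ↦ u + i_{n+1} v`, for Lipschitz spinors `κₘ = (ξₘ, ηₘ)` with
`zₘ = ξₘ + i_{n+1} ηₘ` one has `conj(z₁) z₂ = ⟨κ₁, κ₂⟩ + i_{n+1} {κ₁, κ₂}`. -/
theorem embed_product_formula (n : ℕ) (ξ₁ η₁ ξ₂ η₂ : CliffordAlgebra (negQ n))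
    (h₁ : IsSpinor (negQ n) ξ₁ η₁) (h₂ : IsSpinor (negQ n) ξ₂ η₂) :
    cconj (CliffordAlgebra.map (inclIso n) ξ₁ +
        ι (negQ (n + 1)) (Pi.single (Fin.last n) 1) * CliffordAlgebra.map (inclIso n) η₁) *
      (CliffordAlgebra.map (inclIso n) ξ₂ +
        ι (negQ (n + 1)) (Pi.single (Fin.last n) 1) * CliffordAlgebra.map (inclIso n) η₂) =
    CliffordAlgebra.map (inclIso n) (cconj ξ₁ * ξ₂ + cconj η₁ * η₂) +
      ι (negQ (n + 1)) (Pi.single (Fin.last n) 1) *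
        CliffordAlgebra.map (inclIso n) (reverse ξ₁ * η₂ - reverse η₁ * ξ₂) := by
  have key := map_mul_gen n
  have sq := gen_sq n
  have inv := map_invol n
  have rev := map_rev n
  have k1 := key (cconj ξ₁)
  have k2 := key (cconj η₁)
  have e : ∀ x : CliffordAlgebra (negQ n), involute (cconj x) = reverse x := fun x => by
    rw [cconj, ← reverse_involute, involute_involute]
  rw [e] at k1 k2
  have c : cconj (CliffordAlgebra.map (inclIso n) ξ₁ +
        ι (negQ (n + 1)) (Pi.single (Fin.last n) 1) * CliffordAlgebra.map (inclIso n) η₁) =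
      CliffordAlgebra.map (inclIso n) (cconj ξ₁) -
        CliffordAlgebra.map (inclIso n) (cconj η₁) *
          ι (negQ (n + 1)) (Pi.single (Fin.last n) 1) := by
    simp only [cconj, map_add, map_mul, inv, involute_ι, reverse.map_mul, rev, map_neg,
      reverse_ι, mul_neg, sub_eq_add_neg]
  rw [c]
  generalize ι (negQ (n + 1)) (Pi.single (Fin.last n) 1) = i at *
  simp only [map_add, map_sub, map_mul]
  generalize CliffordAlgebra.map (inclIso n) (cconj ξ₁) = A at *
  generalize CliffordAlgebra.map (inclIso n) (cconj η₁) = B at *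
  simp only [sub_mul, mul_add, mul_sub, ← mul_assoc]
  rw [k1, mul_assoc B i i, sq, ← k2]
  noncomm_ring

end PaperCliff
end
end

section
/- For a Clifford matrix A = [[a,b],[c,d]] ∈ SL(2, $Γ_{n+1}) (so a^*d − c^*b = 1), the variant pseudo-determinant identities ad^* − bc^* = 1, da^* − cb^* = 1, and d^*a − b^*c = 1 also hold. -/
open CliffordAlgebra

noncomputable section

namespace PaperCliff

variable {M : Type*} [AddCommGroup M] [Module ℝ M]

/-- For a Clifford matrix `[[a,b],[c,d]] ∈ SL(2, $Γ_{n+1})` (so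
`a^* d − c^* b = 1`), the variant pseudo-determinant identities `a d^* − b c^* = 1`,
`d a^* − c b^* = 1` and `d^* a − b^* c = 1` also hold. -/
theorem variant_pseudodeterminants (n : ℕ) (a b c d : CliffordAlgebra (negQ n))
    (h : IsSL2 (negQ n) a b c d) :
    a * reverse d - b * reverse c = 1 ∧
    d * reverse a - c * reverse b = 1 ∧
    reverse d * a - reverse b * c = 1 := by
  obtain ⟨ha, hb, hc, hd, h1, hab, hcd, hca, hdb⟩ := h
  have eab := reverse_of_mem_paravec hab
  have eca := reverse_of_mem_paravec hca
  simp only [reverse.map_mul, reverse_reverse] at eab eca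
  have h3 : reverse d * a - reverse b * c = 1 := by
    have := congrArg reverse h1
    simpa [reverse.map_mul, reverse_reverse] using this
  have key : a * reverse d - b * reverse c = 1 := by
    rcases ha with rfl | ⟨u, -, rfl⟩
    · have hcb : (-reverse c) * b = 1 := by simpa using h1
      rcases hb with rfl | ⟨w, -, rfl⟩
      · have h01 : (0 : CliffordAlgebra (negQ n)) = 1 := by simpa using hcb
        simpa using h01
      · have := (Units.mul_eq_one_iff_eq_inv (u := w)).1 hcb
        have h2 : (w : CliffordAlgebra (negQ n)) * (-reverse c) = 1 := by
          rw [this]; simp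
        rw [mul_neg] at h2
        simpa [sub_eq_add_neg] using h2
    · set a : CliffordAlgebra (negQ n) := (u : CliffordAlgebra (negQ n)) with hadef
      have hu : a * (↑u⁻¹ : CliffordAlgebra (negQ n)) = 1 := by simp [hadef]
      have hd' : reverse d * a = 1 + reverse b * c := by rw [← h3]; abel
      have e : (a * reverse d - b * reverse c) * a = a := by
        calc (a * reverse d - b * reverse c) * a
            = a * (reverse d * a) - b * (reverse c * a) := by noncomm_ring
          _ = a + (a * reverse b) * c - b * (reverse c * a) := by rw [hd']; noncomm_ring
          _ = a := by rw [← eab, ← eca]; noncomm_ring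
      have := congrArg (· * (↑u⁻¹ : CliffordAlgebra (negQ n))) e
      simpa only [mul_assoc, hu, mul_one] using this
  refine ⟨key, ?_, h3⟩
  have := congrArg reverse key
  simpa [reverse.map_mul, reverse_reverse] using this

end PaperCliff
end
end

section
/- Noncommutative Ptolemy relation: for four Lipschitz spinors κ_j = (ξ_j, η_j), j = 1,...,4, with pairwise brackets λ_{jk} = {κ_j, κ_k} = ξ_j^* η_k − η_j^* ξ_k all invertible as required, the identity λ_{31}^{-1} λ_{23}^* λ_{42}^{-1} λ_{14}^* + λ_{31}^{-1} λ_{43}^* λ_{24}^{-1} λ_{12}^* = 1 holds. -/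
open CliffordAlgebra

noncomputable section

namespace PaperCliff

variable {M : Type*} [AddCommGroup M] [Module ℝ M]

theorem star_mul_self_lip {Q : QuadraticForm ℝ M} (u : (CliffordAlgebra Q)ˣ)
    (hu : u ∈ lipUnits Q) :
    ∃ c : ℝ, c ≠ 0 ∧ star (u : CliffordAlgebra Q) * u = algebraMap ℝ _ c := by
  unfold lipUnits at hu
  induction hu using Subgroup.closure_induction with
  | mem x hx =>
    obtain ⟨y, ⟨a, rfl⟩, z, ⟨m, rfl⟩, h⟩ := Submodule.mem_sup.1 hx
    have key : star (x : CliffordAlgebra Q) * x = algebraMap ℝ _ (a * a - Q m) := by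
      rw [← h]
      simp only [Algebra.linearMap_apply, star_add, star_algebraMap, star_ι]
      have hc := Algebra.commutes a (ι Q m)
      rw [map_sub, map_mul, ← ι_sq_scalar]
      simp only [add_mul, mul_add, neg_mul, hc]
      abel
    refine ⟨_, ?_, key⟩
    intro h0
    rw [h0, map_zero, Units.mul_left_eq_zero] at key
    exact x.ne_zero (star_eq_zero.1 key)
  | one => exact ⟨1, one_ne_zero, by simp⟩
  | mul x y _ _ hx hy =>
    obtain ⟨c, hc, h1⟩ := hx
    obtain ⟨d, hd, h2⟩ := hy
    refine ⟨c * d, mul_ne_zero hc hd, ?_⟩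
    rw [Units.val_mul, star_mul, mul_assoc, ← mul_assoc (star (x : CliffordAlgebra Q)), h1,
      Algebra.commutes, ← mul_assoc, h2, ← map_mul, mul_comm]
  | inv x _ hx =>
    obtain ⟨c, hc, h1⟩ := hx
    refine ⟨c⁻¹, inv_ne_zero hc, ?_⟩
    have h2 : star (x : CliffordAlgebra Q) = algebraMap ℝ _ c * (↑x⁻¹ : CliffordAlgebra Q) := by
      rw [← h1, Units.mul_inv_cancel_right]
    have h3 : star (↑x⁻¹ : CliffordAlgebra Q) * star (x : CliffordAlgebra Q) = 1 := by
      rw [← star_mul, Units.mul_inv, star_one]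
    rw [h2, Algebra.commutes, ← mul_assoc] at h3
    have h4 := congrArg (· * algebraMap ℝ (CliffordAlgebra Q) c⁻¹) h3
    simpa [mul_assoc, ← map_mul, mul_inv_cancel₀ hc] using h4

theorem reverse_paravec {Q : QuadraticForm ℝ M} {p : CliffordAlgebra Q} (hp : p ∈ paravec Q) :
    reverse p = p := by
  obtain ⟨y, ⟨a, rfl⟩, z, ⟨m, rfl⟩, rfl⟩ := Submodule.mem_sup.1 hp
  simp [reverse_ι, reverse.commutes]

theorem spinor_self {Q : QuadraticForm ℝ M} {ξ η : CliffordAlgebra Q} (h : IsSpinor Q ξ η) :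
    reverse ξ * η = reverse η * ξ := by
  obtain ⟨-, hη, -, hp⟩ := h
  rcases hη with rfl | ⟨u, hu, rfl⟩
  · simp
  obtain ⟨c, hc, h1⟩ := star_mul_self_lip u hu
  have hr := reverse_paravec hp
  set p := ξ * cconj (u : CliffordAlgebra Q) with hpdef
  have h2 : c • ξ = p * u := by
    rw [hpdef, cconj, ← star_def, mul_assoc, h1, ← Algebra.commutes, Algebra.smul_def]
  have h3 : ξ = c⁻¹ • (p * u) := by rw [← h2, smul_smul, inv_mul_cancel₀ hc, one_smul]
  rw [h3]
  simp [reverse.map_mul, hr, mul_assoc]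

theorem spinor_unit {Q : QuadraticForm ℝ M} {ξ η : CliffordAlgebra Q} (h : IsSpinor Q ξ η) :
    IsUnit ξ ∨ IsUnit η := by
  obtain ⟨hξ, hη, hn, -⟩ := h
  rcases hξ with rfl | ⟨u, -, rfl⟩
  · rcases hη with rfl | ⟨v, -, rfl⟩
    · exact absurd ⟨rfl, rfl⟩ hn
    · exact Or.inr v.isUnit
  · exact Or.inl u.isUnit

/-- Nondegeneracy, first case: `a, b, c, d` are `ξ₂^*, η₂^*, ξ₄^*, η₄^*`. -/
theorem nondeg {R : Type*} [Ring R] {a b c d s t x y : R} (hs : IsUnit s) (ha : IsUnit a)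
    (hself : a * t = b * s) (hl : IsUnit (c * t - d * s))
    (h1 : a * y = b * x) (h2 : c * y = d * x) : x = 0 ∧ y = 0 := by
  obtain ⟨s, rfl⟩ := hs
  have hy : y = t * (↑s⁻¹ * x) := by
    apply ha.mul_left_cancel
    rw [h1, ← mul_assoc a, hself, mul_assoc, Units.mul_inv_cancel_left]
  have h3 : (c * t - d * s) * (↑s⁻¹ * x) = 0 := by
    rw [sub_mul, mul_assoc c, ← hy, h2, mul_assoc d, Units.mul_inv_cancel_left, sub_self]
  have h4 := (hl.mul_right_eq_zero).1 h3
  refine ⟨by simpa using h4, by rw [hy, h4, mul_zero]⟩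

theorem isUnit_reverse {Q : QuadraticForm ℝ M} {x : CliffordAlgebra Q} (h : IsUnit x) :
    IsUnit (reverse x) := by
  obtain ⟨u, rfl⟩ := h
  refine ⟨⟨reverse u, reverse (↑u⁻¹ : CliffordAlgebra Q), ?_, ?_⟩, rfl⟩ <;>
    rw [← reverse.map_mul] <;> simp

/-- **Noncommutative Ptolemy relation.** For four Lipschitz spinors
`κⱼ = (ξⱼ, ηⱼ)` with pairwise brackets `λⱼₖ = {κⱼ, κₖ} = ξⱼ^* ηₖ − ηⱼ^* ξₖ` all invertible,
`λ₃₁⁻¹ λ₂₃^* λ₄₂⁻¹ λ₁₄^* + λ₃₁⁻¹ λ₄₃^* λ₂₄⁻¹ λ₁₂^* = 1`.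
(Indices here run over `Fin 4`, so the paper's `1,2,3,4` are `0,1,2,3`.) -/
theorem noncommutative_ptolemy (n : ℕ) (ξ η : Fin 4 → CliffordAlgebra (negQ n))
    (hs : ∀ j, IsSpinor (negQ n) (ξ j) (η j))
    (lam : Fin 4 → Fin 4 → CliffordAlgebra (negQ n))
    (hlam : ∀ j k, lam j k = reverse (ξ j) * η k - reverse (η j) * ξ k)
    (hunit : ∀ j k, j ≠ k → IsUnit (lam j k)) :
    Ring.inverse (lam 2 0) * reverse (lam 1 2) *
        Ring.inverse (lam 3 1) * reverse (lam 0 3) +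
      Ring.inverse (lam 2 0) * reverse (lam 3 2) *
        Ring.inverse (lam 1 3) * reverse (lam 0 1) = 1 := by
  have hrev : ∀ j k, reverse (lam j k) = - lam k j := by
    intro j k
    simp [hlam, reverse.map_mul]
  have hself : ∀ j, lam j j = 0 := fun j => by rw [hlam, spinor_self (hs j), sub_self]
  obtain ⟨u, hu⟩ := hunit 3 1 (by decide)
  obtain ⟨v, hv⟩ := hunit 1 3 (by decide)
  obtain ⟨w, hw⟩ := hunit 2 0 (by decide)
  simp only [hrev, ← hu, ← hv, ← hw, Ring.inverse_unit]
  set a : CliffordAlgebra (negQ n) := ↑u⁻¹ * lam 3 0 with ha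
  set b : CliffordAlgebra (negQ n) := ↑v⁻¹ * lam 1 0 with hb
  have hlin : ∀ j, reverse (ξ j) * (η 0 - η 1 * a - η 3 * b) -
      reverse (η j) * (ξ 0 - ξ 1 * a - ξ 3 * b) = lam j 0 - lam j 1 * a - lam j 3 * b := by
    intro j
    rw [hlam, hlam, hlam]
    noncomm_ring
  have e1 : lam 1 0 - lam 1 1 * a - lam 1 3 * b = 0 := by
    rw [hself, hb, ← hv, Units.mul_inv_cancel_left]; simp
  have e3 : lam 3 0 - lam 3 1 * a - lam 3 3 * b = 0 := by
    rw [hself, ha, ← hu, Units.mul_inv_cancel_left]; simp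
  rw [← hlin, sub_eq_zero] at e1 e3
  have hl : IsUnit (reverse (ξ 3) * η 1 - reverse (η 3) * ξ 1) := by
    rw [← hlam]; exact hunit 3 1 (by decide)
  have hz : (ξ 0 - ξ 1 * a - ξ 3 * b) = 0 ∧ (η 0 - η 1 * a - η 3 * b) = 0 := by
    rcases spinor_unit (hs 1) with h | h
    · exact nondeg h (isUnit_reverse h) (spinor_self (hs 1)) hl e1 e3
    · refine (nondeg h (isUnit_reverse h) (spinor_self (hs 1)).symm ?_ e1.symm e3.symm).symm
      rw [← neg_sub]; exact hl.neg
  have e2 := hlin 2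
  rw [hz.1, hz.2, mul_zero, mul_zero, sub_self] at e2
  have e : lam 2 1 * a + lam 2 3 * b = w := by
    rw [hw, ← sub_eq_zero, ← neg_eq_zero, e2]; abel
  rw [← Units.inv_mul w, ← e, ha, hb]
  noncomm_ring

end PaperCliff
end
end
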